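/- arXiv:2106.12977 — 5 statements merged into one kernel-verified Lean document; each statement's English description precedes it below -/
import Mathlib

section
/- Every matching problem possesses at least one stable matching. -/
/-- `(w,f)` blocks the matching `μ`: `f ≻_w μ(w)` and `w ≻_f μ⁻¹(f)`.
`prefW w f f'` means worker `w` strictly prefers firm `f` to firm `f'`;
`prefF f w w'` means firm `f` strictly prefers worker `w` to worker `w'`. -/
def Blocks {W F : Type*} (prefW : W → F → F → Prop) (prefF : F → W → W → Prop)
    (μ : W ≃ F) (w : W) (f : F) : Prop :=
  prefW w f (μ w) ∧ prefF f w (μ.symm f)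

/-- A matching is stable if no pair blocks it. -/
def IsStableMatching {W F : Type*} (prefW : W → F → F → Prop)
    (prefF : F → W → W → Prop) (μ : W ≃ F) : Prop :=
  ∀ w f, ¬ Blocks prefW prefF μ w f

/-- A pair `(w,f)` is unattractive in `S`. -/
def Unattractive {W F : Type*} (prefW : W → F → F → Prop) (prefF : F → W → W → Prop)
    (S : Set (W × F)) (w : W) (f : F) : Prop :=
  (∃ f', (w, f') ∈ S ∧ prefW w f' f ∧
      ∀ w', w' ≠ w → (w', f') ∈ S → prefF f' w w') ∨
  (∃ w', (w', f) ∈ S ∧ prefF f w' w ∧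
      ∀ f'', f'' ≠ f → (w', f'') ∈ S → prefW w' f f'')

/-- `delta S` is `S` with all pairs unattractive in `S` removed. -/
def delta {W F : Type*} (prefW : W → F → F → Prop) (prefF : F → W → W → Prop)
    (S : Set (W × F)) : Set (W × F) :=
  {p ∈ S | ¬ Unattractive prefW prefF S p.1 p.2}

/-- The normal form: the fixed point of `delta` reached by iterating from `W × F`.
Since `delta S ⊆ S` and `W × F` is finite, `Fintype.card (W × F)` iterations suffice. -/
def NormalForm (W F : Type*) [Fintype W] [Fintype F]
    (prefW : W → F → F → Prop) (prefF : F → W → W → Prop) : Set (W × F) :=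
  (delta prefW prefF)^[Fintype.card (W × F)] Set.univ

/-- `μ` is `S`-stable: `S`-admissible and no pair of `S` blocks it within `S`. -/
def SStable {W F : Type*} (prefW : W → F → F → Prop) (prefF : F → W → W → Prop)
    (S : Set (W × F)) (μ : W ≃ F) : Prop :=
  (∀ w, (w, μ w) ∈ S) ∧
  ∀ w f, (w, f) ∈ S → ¬ (prefW w f (μ w) ∧ prefF f w (μ.symm f))

/-- Arcs of the matching digraph `D(S)`: from `(w,f)` to `(w,f')` whenever `f' ≻_w f`,
and from `(w,f)` to `(w',f)` whenever `w' ≻_f w`. -/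
def Arc {W F : Type*} (prefW : W → F → F → Prop) (prefF : F → W → W → Prop)
    (S : Set (W × F)) (p q : W × F) : Prop :=
  p ∈ S ∧ q ∈ S ∧
    ((p.1 = q.1 ∧ prefW p.1 q.2 p.2) ∨ (p.2 = q.2 ∧ prefF p.2 q.1 p.1))

/-- `D(S)` contains a directed cycle: distinct vertices `c 0, …, c (n-1)` with `n ≥ 1`,
`c n = c 0`, and an arc from each vertex to the next. -/
def HasDirectedCycle {W F : Type*} (prefW : W → F → F → Prop)
    (prefF : F → W → W → Prop) (S : Set (W × F)) : Prop :=
  ∃ (n : ℕ) (c : Fin (n + 1) → W × F), 0 < n ∧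
    Function.Injective (fun i : Fin n => c i.castSucc) ∧
    c (Fin.last n) = c 0 ∧
    ∀ i : Fin n, Arc prefW prefF S (c i.castSucc) (c i.succ)

/-- The preference lists possess a cycle: there are `k ≥ 2`, distinct workers
`w_1, …, w_k` and distinct firms `f_1, …, f_k` (indexed by `ZMod k`) with
`f_{j+1} ≻_{w_j} f_j` and `w_j ≻_{f_j} w_{j-1}` for all `j`, indices modulo `k`. -/
def PrefCycle {W F : Type*} (prefW : W → F → F → Prop)
    (prefF : F → W → W → Prop) : Prop :=
  ∃ k : ℕ, 2 ≤ k ∧ ∃ (ws : ZMod k → W) (fs : ZMod k → F),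
    Function.Injective ws ∧ Function.Injective fs ∧
    ∀ j : ZMod k, prefW (ws j) (fs (j + 1)) (fs j) ∧ prefF (fs j) (ws j) (ws (j - 1))

/-! Deferred acceptance, phrased through sets of rejections: call such a set justified if every
rejected pair `(w, f)` is witnessed by a worker whom `f` prefers to `w` and who likes `f` best among
the firms that have not rejected them. A firm that is the favourite of two workers can reject the
one it likes less, and the set stays justified; so in a maximal justified set distinct workers have
distinct favourites. Giving each worker their favourite is stable, since every firm a worker would
rather have has rejected them in favour of a worker it likes better. -/

section

variable {W F : Type*} {prefW : W → F → F → Prop} {prefF : F → W → W → Prop} {R : Set (W × F)}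

/-- `f` is the favourite firm of `w` among those that have not rejected `w`, where `(w, f) ∈ R`
means that `f` has rejected `w`. In deferred acceptance this is the firm `w` proposes to. -/
def IsFavourite (prefW : W → F → F → Prop) (R : Set (W × F)) (w : W) (f : F) : Prop :=
  (w, f) ∉ R ∧ ∀ f', prefW w f' f → (w, f') ∈ R

/-- A set of rejections is justified if each firm `f` that has rejected a worker `w` is the
favourite of a worker it prefers to `w`. This is the invariant of deferred acceptance. -/
def IsJustified (prefW : W → F → F → Prop) (prefF : F → W → W → Prop) (R : Set (W × F)) : Prop :=
  ∀ w f, (w, f) ∈ R → ∃ v, prefF f v w ∧ IsFavourite prefW R v f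

theorem IsFavourite.unique {w : W} {f g : F} [Std.Trichotomous (prefW w)]
    (hf : IsFavourite prefW R w f) (hg : IsFavourite prefW R w g) : f = g :=
  Std.Trichotomous.trichotomous (r := prefW w) f g
    (fun hfg => hf.1 (hg.2 f hfg)) (fun hgf => hg.1 (hf.2 g hgf))

theorem exists_isFavourite_of_notMem {w : W} {f : F} (hwf : WellFounded (prefW w))
    (hf : (w, f) ∉ R) : ∃ g, IsFavourite prefW R w g := by
  obtain ⟨g, hg, hmin⟩ := hwf.has_min {g | (w, g) ∉ R} ⟨f, hf⟩
  exact ⟨g, hg, fun f' hf'g => by_contra fun hf' => hmin f' hf' hf'g⟩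

theorem IsFavourite.insert_of_ne {w : W} {f : F} {p : W × F}
    (h : IsFavourite prefW R w f) (hne : (w, f) ≠ p) : IsFavourite prefW (insert p R) w f :=
  ⟨fun hmem => hmem.elim hne h.1, fun f' hf' => Or.inr (h.2 f' hf')⟩

theorem IsJustified.insert_of_isFavourite {v w : W} {f : F} [IsStrictOrder W (prefF f)]
    (hR : IsJustified prefW prefF R) (hv : IsFavourite prefW R v f) (hvw : prefF f v w) :
    IsJustified prefW prefF (insert (w, f) R) := by
  have hv' : IsFavourite prefW (insert (w, f) R) v f :=
    hv.insert_of_ne fun h => ne_of_irrefl hvw (congrArg Prod.fst h)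
  rintro u g (hug | hug)
  · obtain ⟨rfl, rfl⟩ := Prod.mk.inj hug
    exact ⟨v, hvw, hv'⟩
  · obtain ⟨t, htu, ht⟩ := hR u g hug
    by_cases heq : (t, g) = (w, f)
    · -- The witness is the newly rejected worker, and `v` takes its place.
      obtain ⟨rfl, rfl⟩ := Prod.mk.inj heq
      exact ⟨v, trans_of (prefF g) hvw htu, hv'⟩
    · exact ⟨t, htu, ht.insert_of_ne heq⟩

theorem IsJustified.exists_notMem [Fintype W] [Fintype F] [∀ w, Std.Trichotomous (prefW w)]
    (hR : IsJustified prefW prefF R) (hcard : Fintype.card W ≤ Fintype.card F) (w : W) :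
    ∃ f, (w, f) ∉ R := by
  by_contra! hall
  -- If every firm has rejected `w`, the firms are favourites of distinct workers other than `w`.
  choose v _ hv using fun f => hR w f (hall f)
  have hinj : Function.Injective v := fun f g hfg => (hv f).unique (hfg ▸ hv g)
  have hw : w ∉ Set.range v := by
    rintro ⟨f, rfl⟩
    exact (hv f).1 (hall f)
  exact hcard.not_gt (Fintype.card_lt_of_injective_of_notMem v hinj hw)

theorem IsFavourite.eq_of_maximal {v w : W} {f : F} [IsStrictTotalOrder W (prefF f)]
    (hv : IsFavourite prefW R v f) (hw : IsFavourite prefW R w f)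
    (hR : Maximal (IsJustified prefW prefF) R) : v = w := by
  have not_pref {a b : W} (ha : IsFavourite prefW R a f) (hb : IsFavourite prefW R b f) :
      ¬ prefF f a b := fun hab =>
    hb.1 (hR.mem_of_prop_insert (hR.prop.insert_of_isFavourite ha hab))
  exact Std.Trichotomous.trichotomous (r := prefF f) v w (not_pref hv hw) (not_pref hw hv)

theorem isStableMatching_of_forall_exists [∀ f, Std.Asymm (prefF f)] {μ : W ≃ F}
    (h : ∀ w f, prefW w f (μ w) → ∃ v, μ v = f ∧ prefF f v w) :
    IsStableMatching prefW prefF μ := by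
  rintro w f ⟨hwf, hfw⟩
  obtain ⟨v, rfl, hvw⟩ := h w f hwf
  rw [μ.symm_apply_apply] at hfw
  exact asymm hvw hfw

/-- The last clause says that no pair blocks `μ` when unmatched firms accept every worker. -/
theorem exists_stable_matching_general [Fintype W] [Fintype F]
    (hcard : Fintype.card W ≤ Fintype.card F)
    (prefW : W → F → F → Prop) (prefF : F → W → W → Prop)
    [∀ w, IsStrictTotalOrder F (prefW w)] [∀ f, IsStrictTotalOrder W (prefF f)] :
    ∃ μ : W → F, Function.Injective μ ∧
      ∀ w f, prefW w f (μ w) → ∃ v, μ v = f ∧ prefF f v w := by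
  obtain ⟨R, hR⟩ : ∃ R, Maximal (IsJustified prefW prefF) R :=
    (Set.toFinite {R | IsJustified prefW prefF R}).exists_maximal ⟨∅, fun _ _ h => h.elim⟩
  have hfav (w : W) : ∃ f, IsFavourite prefW R w f :=
    have ⟨_, hf⟩ := hR.prop.exists_notMem hcard w
    exists_isFavourite_of_notMem (Finite.wellFounded_of_trans_of_irrefl (prefW w)) hf
  choose μ hμ using hfav
  refine ⟨μ, fun v w hvw => (hμ v).eq_of_maximal (hvw ▸ hμ w) hR, fun w f hwf => ?_⟩
  obtain ⟨v, hvw, hv⟩ := hR.prop w f ((hμ w).2 f hwf)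
  exact ⟨v, (hμ v).unique hv, hvw⟩

end

/-- Every matching problem possesses at least one stable matching. -/
theorem exists_stable_matching {W F : Type*} [Fintype W] [Fintype F] [Nonempty W]
    (hcard : Fintype.card W = Fintype.card F)
    (prefW : W → F → F → Prop) (prefF : F → W → W → Prop)
    (hW : ∀ w, IsStrictTotalOrder F (prefW w))
    (hF : ∀ f, IsStrictTotalOrder W (prefF f)) :
    ∃ μ : W ≃ F, IsStableMatching prefW prefF μ := by
  obtain ⟨μ, hinj, hμ⟩ := exists_stable_matching_general hcard.le prefW prefF
  exact ⟨.ofBijective μ ((Fintype.bijective_iff_injective_and_card μ).2 ⟨hinj, hcard⟩),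
    isStableMatching_of_forall_exists hμ⟩
end

section
/- For every set S ⊆ W × F, if a pair (w,f) ∈ S is unattractive in S, then no S-stable matching μ satisfies μ(w) = f. -/
section Stability

variable {W F : Type*} {prefW : W → F → F → Prop} {prefF : F → W → W → Prop}
  {S : Set (W × F)} {μ : W ≃ F} {w : W} {f : F}

theorem SStable.symm (hμ : SStable prefW prefF S μ) :
    SStable prefF prefW (Prod.swap ⁻¹' S) μ.symm := by
  obtain ⟨admissible, unblocked⟩ := hμ
  refine ⟨fun f ↦ ?_, fun f w hS hblock ↦ unblocked w f hS hblock.symm⟩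
  simpa using admissible (μ.symm f)

theorem SStable.not_prefW_apply_of_forall_prefF [Std.Irrefl (prefW w)]
    (hμ : SStable prefW prefF S μ) (hS : (w, f) ∈ S)
    (top : ∀ w', w' ≠ w → (w', f) ∈ S → prefF f w w') :
    ¬ prefW w f (μ w) := by
  intro f_preferred
  have partner_ne : μ.symm f ≠ w := by
    rintro rfl
    rw [μ.apply_symm_apply] at f_preferred
    exact irrefl f f_preferred
  have partner_mem : (μ.symm f, f) ∈ S := hμ.symm.1 f
  exact hμ.2 w f hS ⟨f_preferred, top _ partner_ne partner_mem⟩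

theorem SStable.not_prefF_symm_apply_of_forall_prefW [Std.Irrefl (prefF f)]
    (hμ : SStable prefW prefF S μ) (hS : (w, f) ∈ S)
    (top : ∀ f', f' ≠ f → (w, f') ∈ S → prefW w f f') :
    ¬ prefF f w (μ.symm f) :=
  hμ.symm.not_prefW_apply_of_forall_prefF hS top

theorem unattractive_not_matched_general [Std.Irrefl (prefW w)] [Std.Irrefl (prefF f)]
    (hun : Unattractive prefW prefF S w f) (hμ : SStable prefW prefF S μ) :
    μ w ≠ f := by
  rintro rfl
  rcases hun with ⟨f', hS, f'_preferred, top⟩ | ⟨w', hS, w'_preferred, top⟩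
  · exact hμ.not_prefW_apply_of_forall_prefF hS top f'_preferred
  · refine hμ.not_prefF_symm_apply_of_forall_prefW hS top ?_
    rwa [μ.symm_apply_apply]

end Stability

/-- If `(w,f) ∈ S` is unattractive in `S`, then no `S`-stable matching matches `w` with `f`. -/
theorem unattractive_not_matched {W F : Type*} [Fintype W] [Fintype F] [Nonempty W]
    (hcard : Fintype.card W = Fintype.card F)
    (prefW : W → F → F → Prop) (prefF : F → W → W → Prop)
    (hW : ∀ w, IsStrictTotalOrder F (prefW w))
    (hF : ∀ f, IsStrictTotalOrder W (prefF f))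
    (S : Set (W × F)) (w : W) (f : F)
    (hmem : (w, f) ∈ S)
    (hun : Unattractive prefW prefF S w f)
    (μ : W ≃ F) (hμ : SStable prefW prefF S μ) :
    μ w ≠ f := by
  have := hW w
  have := hF f
  exact unattractive_not_matched_general hun hμ
end

section
/- For every set S ⊆ W × F, a matching μ is S-stable if and only if μ is Δ(S)-stable; that is, one round of deletion of unattractive pairs does not change the set of stable matchings. -/
/-!
If `f` ranks `w` first within `S`, then `w` can always count on `f`: in an `S`-stable matching `w`
does not prefer `f` to its partner, since otherwise `(w, f)` would block. Hence no pair of an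
`S`-stable matching is unattractive. Conversely, the same guarantee holds for `Δ(S)`-stable
matchings, by induction on `f` along the preference of `w`: if the pair `(w, f)` was deleted, then
`w` is also the first choice of a firm that it prefers to `f`. Therefore a deleted pair cannot block
a `Δ(S)`-stable matching. Exchanging workers and firms gives the other half of each argument.
-/

section DeletionRound

variable {W F : Type*} {prefW : W → F → F → Prop} {prefF : F → W → W → Prop}
  {S : Set (W × F)} {μ : W ≃ F} {w : W} {f : F}

/-- `w` is the first choice of `f` within `S`: the pair `(w, f)` belongs to `S` and `f` prefers `w`
to every other worker `w'` with `(w', f) ∈ S`. The first choice of a worker is encoded by passing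
the preimage of `S` under `Prod.swap`. -/
def IsFirstChoice (prefF : F → W → W → Prop) (S : Set (W × F)) (w : W) (f : F) : Prop :=
  (w, f) ∈ S ∧ ∀ w', w' ≠ w → (w', f) ∈ S → prefF f w w'

/-- The worker's half of the definition of an unattractive pair: `w` is the first choice within `S`
of a firm that it prefers to `f`. The firm's half is the same notion with the two sides exchanged
and the preimage of `S` under `Prod.swap` in place of `S`. -/
def UnattractiveToWorker (prefW : W → F → F → Prop) (prefF : F → W → W → Prop)
    (S : Set (W × F)) (w : W) (f : F) : Prop :=
  ∃ f', IsFirstChoice prefF S w f' ∧ prefW w f' f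

theorem unattractive_iff_unattractiveToWorker_or :
    Unattractive prefW prefF S w f ↔ UnattractiveToWorker prefW prefF S w f ∨
      UnattractiveToWorker prefF prefW (Prod.swap ⁻¹' S) f w := by
  simp only [Unattractive, UnattractiveToWorker, IsFirstChoice, Set.mem_preimage, Prod.swap_prod_mk,
    and_assoc, and_comm (a := prefW w _ f), and_comm (a := prefF f _ w)]

theorem delta_swap :
    delta prefF prefW (Prod.swap ⁻¹' S) = Prod.swap ⁻¹' delta prefW prefF S :=
  Set.ext fun _ => and_congr_right fun _ => not_congr or_comm

theorem delta_subset : delta prefW prefF S ⊆ S :=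
  Set.sep_subset _ _

theorem IsFirstChoice.mono {T : Set (W × F)} (hw : IsFirstChoice prefF S w f) (hTS : T ⊆ S)
    (hT : (w, f) ∈ T) : IsFirstChoice prefF T w f :=
  ⟨hT, fun w' hne hw' => hw.2 w' hne (hTS hw')⟩

theorem IsFirstChoice.not_unattractiveToWorker_swap [Std.Asymm (prefF f)]
    (hw : IsFirstChoice prefF S w f) :
    ¬ UnattractiveToWorker prefF prefW (Prod.swap ⁻¹' S) f w := by
  rintro ⟨w', hw', hpref⟩
  have hne : w' ≠ w := ne_of_irrefl hpref
  exact asymm hpref (hw.2 w' hne hw'.1)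

theorem IsFirstChoice.unattractiveToWorker_of_notMem_delta [Std.Asymm (prefF f)]
    (hw : IsFirstChoice prefF S w f) (hdel : (w, f) ∉ delta prefW prefF S) :
    UnattractiveToWorker prefW prefF S w f := by
  have hun : Unattractive prefW prefF S w f := not_not.mp fun hun => hdel ⟨hw.1, hun⟩
  exact (unattractive_iff_unattractiveToWorker_or.mp hun).resolve_right
    hw.not_unattractiveToWorker_swap

namespace SStable

theorem swap (h : SStable prefW prefF S μ) : SStable prefF prefW (Prod.swap ⁻¹' S) μ.symm :=
  ⟨fun f => by simpa using h.1 (μ.symm f), fun f w hS hb => h.2 w f hS hb.symm⟩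

theorem not_prefW_of_isFirstChoice [Std.Irrefl (prefW w)] (h : SStable prefW prefF S μ)
    (hw : IsFirstChoice prefF S w f) : ¬ prefW w f (μ w) := by
  intro hpref
  have hne : μ.symm f ≠ w := fun heq => ne_of_irrefl hpref (μ.symm_apply_eq.mp heq)
  have hadm : (μ.symm f, f) ∈ S := by simpa using h.1 (μ.symm f)
  exact h.2 w f hw.1 ⟨hpref, hw.2 (μ.symm f) hne hadm⟩

theorem not_unattractiveToWorker [Std.Irrefl (prefW w)] (h : SStable prefW prefF S μ) :
    ¬ UnattractiveToWorker prefW prefF S w (μ w) :=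
  fun ⟨_, hw, hpref⟩ => h.not_prefW_of_isFirstChoice hw hpref

protected theorem delta [∀ w, Std.Irrefl (prefW w)] [∀ f, Std.Irrefl (prefF f)]
    (h : SStable prefW prefF S μ) : SStable prefW prefF (delta prefW prefF S) μ := by
  refine ⟨fun w => ⟨h.1 w, fun hun => ?_⟩, fun w f hS => h.2 w f (delta_subset hS)⟩
  rcases unattractive_iff_unattractiveToWorker_or.mp hun with hworker | hfirm
  · exact h.not_unattractiveToWorker hworker
  · exact h.swap.not_unattractiveToWorker (w := μ w) (by simpa using hfirm)

theorem not_prefW_of_delta_of_isFirstChoice [IsTrans F (prefW w)] [IsWellFounded F (prefW w)]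
    [∀ f, Std.Asymm (prefF f)] (h : SStable prefW prefF (delta prefW prefF S) μ)
    (hw : IsFirstChoice prefF S w f) : ¬ prefW w f (μ w) := by
  induction f using IsWellFounded.induction (prefW w) with
  | ind f ih =>
    intro hpref
    by_cases hmem : (w, f) ∈ delta prefW prefF S
    · exact h.not_prefW_of_isFirstChoice (hw.mono delta_subset hmem) hpref
    · obtain ⟨f', hw', hpref'⟩ := hw.unattractiveToWorker_of_notMem_delta hmem
      exact ih f' hpref' hw' (_root_.trans hpref' hpref)

theorem not_prefW_of_delta_of_unattractiveToWorker [IsTrans F (prefW w)]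
    [IsWellFounded F (prefW w)] [∀ f, Std.Asymm (prefF f)]
    (h : SStable prefW prefF (delta prefW prefF S) μ)
    (hun : UnattractiveToWorker prefW prefF S w f) : ¬ prefW w f (μ w) := by
  obtain ⟨f', hw, hpref⟩ := hun
  exact fun hpref' => h.not_prefW_of_delta_of_isFirstChoice hw (_root_.trans hpref hpref')

theorem of_delta [∀ w, IsTrans F (prefW w)] [∀ w, IsWellFounded F (prefW w)]
    [∀ f, IsTrans W (prefF f)] [∀ f, IsWellFounded W (prefF f)]
    (h : SStable prefW prefF (delta prefW prefF S) μ) : SStable prefW prefF S μ := by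
  refine ⟨fun w => delta_subset (h.1 w), fun w f hS hblock => ?_⟩
  have hun : Unattractive prefW prefF S w f := not_not.mp fun hun => h.2 w f ⟨hS, hun⟩ hblock
  rcases unattractive_iff_unattractiveToWorker_or.mp hun with hworker | hfirm
  · exact h.not_prefW_of_delta_of_unattractiveToWorker hworker hblock.1
  · have hswap : SStable prefF prefW (delta prefF prefW (Prod.swap ⁻¹' S)) μ.symm :=
      delta_swap ▸ h.swap
    exact hswap.not_prefW_of_delta_of_unattractiveToWorker hfirm hblock.2

end SStable

end DeletionRound

theorem sStable_delta_iff_general {W F : Type*}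
    (prefW : W → F → F → Prop) (prefF : F → W → W → Prop)
    [∀ w, IsTrans F (prefW w)] [∀ w, IsWellFounded F (prefW w)]
    [∀ f, IsTrans W (prefF f)] [∀ f, IsWellFounded W (prefF f)]
    (S : Set (W × F)) (μ : W ≃ F) :
    SStable prefW prefF S μ ↔ SStable prefW prefF (delta prefW prefF S) μ :=
  ⟨SStable.delta, SStable.of_delta⟩

/-- One round of deletion of unattractive pairs does not change the set of stable matchings:
for every `S ⊆ W × F`, a matching is `S`-stable iff it is `Δ(S)`-stable. -/
theorem sStable_delta_iff {W F : Type*} [Fintype W] [Fintype F] [Nonempty W]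
    (hcard : Fintype.card W = Fintype.card F)
    (prefW : W → F → F → Prop) (prefF : F → W → W → Prop)
    (hW : ∀ w, IsStrictTotalOrder F (prefW w))
    (hF : ∀ f, IsStrictTotalOrder W (prefF f))
    (S : Set (W × F)) (μ : W ≃ F) :
    SStable prefW prefF S μ ↔ SStable prefW prefF (delta prefW prefF S) μ := by
  have (w : W) : IsWellFounded F (prefW w) := ⟨Finite.wellFounded_of_trans_of_irrefl _⟩
  have (f : F) : IsWellFounded W (prefF f) := ⟨Finite.wellFounded_of_trans_of_irrefl _⟩
  exact sStable_delta_iff_general prefW prefF S μ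
end

section
/- A matching μ is stable for the matching problem if and only if μ is S*-stable, where S* is the normal form; in particular the matching problem and its normal form have exactly the same set of stable matchings. -/
/-!
It suffices that one step of `delta` preserves the stable matchings. Suppose `(w, f)` is
unattractive, say because `w` prefers to `f` a firm whose favorite worker is `w`. Among all such
firms let `g` be one that `w` likes best: then `(w, g)` survives the step. If `(w, f)` is matched or
blocking, then `w` prefers `g` to its partner, and `g` prefers `w` to every other worker available
to it, so `(w, g)` blocks. Hence no matched pair of a stable matching is removed, and if a blocking
pair is removed then some blocking pair remains. Exchanging workers and firms handles the other
case.
-/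

/-- Worker `w` is the favorite of firm `f` in the set `S` of admissible pairs. A firm being the
favorite of a worker is the same notion for the swapped set `Prod.swap ⁻¹' S`. -/
def IsFavorite {W F : Type*} (prefF : F → W → W → Prop) (S : Set (W × F)) (w : W) (f : F) : Prop :=
  (w, f) ∈ S ∧ ∀ w', w' ≠ w → (w', f) ∈ S → prefF f w w'

section

variable {W F : Type*} {prefW : W → F → F → Prop} {prefF : F → W → W → Prop} {S : Set (W × F)}
  {μ : W ≃ F} {w w' : W} {f f' : F}

theorem unattractive_iff_exists_isFavorite :
    Unattractive prefW prefF S w f ↔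
      (∃ f', prefW w f' f ∧ IsFavorite prefF S w f') ∨
        ∃ w', prefF f w' w ∧ IsFavorite prefW (Prod.swap ⁻¹' S) f w' := by
  simp only [Unattractive, IsFavorite, Set.mem_preimage, Prod.swap_prod_mk, and_left_comm]

theorem mem_delta_swap_iff :
    (f, w) ∈ delta prefF prefW (Prod.swap ⁻¹' S) ↔ (w, f) ∈ delta prefW prefF S :=
  and_congr_right fun _ => not_congr or_comm

theorem blocks_symm_iff : Blocks prefF prefW μ.symm f w ↔ Blocks prefW prefF μ w f :=
  and_comm

theorem IsFavorite.not_prefers [Std.Asymm (prefF f)] (hfav : IsFavorite prefF S w f)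
    (hS : (w', f) ∈ S) : ¬ prefF f w' w := by
  intro hpref
  have hne : w' ≠ w := ne_of_irrefl hpref
  exact asymm hpref (hfav.2 w' hne hS)

theorem IsFavorite.blocks [Std.Irrefl (prefW w)] (hfav : IsFavorite prefF S w f)
    (hμ : ∀ w, (w, μ w) ∈ S) (hpref : prefW w f (μ w)) : Blocks prefW prefF μ w f := by
  have hne : μ.symm f ≠ w := fun h => ne_of_irrefl hpref (μ.symm_apply_eq.1 h)
  exact ⟨hpref, hfav.2 _ hne (by simpa using hμ (μ.symm f))⟩

theorem exists_isFavorite_mem_delta [IsTrans F (prefW w)] [IsWellFounded F (prefW w)]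
    [∀ f, Std.Asymm (prefF f)] (hpref : prefW w f' f) (hfav : IsFavorite prefF S w f') :
    ∃ g, prefW w g f ∧ IsFavorite prefF S w g ∧ (w, g) ∈ delta prefW prefF S := by
  obtain ⟨g, ⟨hgf, hg⟩, hbest⟩ := (IsWellFounded.wf (r := prefW w)).has_min
    {g | prefW w g f ∧ IsFavorite prefF S w g} ⟨f', hpref, hfav⟩
  refine ⟨g, hgf, hg, hg.1, fun hunattractive => ?_⟩
  rcases unattractive_iff_exists_isFavorite.1 hunattractive with
    ⟨g', hg'g, hg'⟩ | ⟨w', hw'w, hw'⟩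
  · exact hbest g' ⟨_root_.trans hg'g hgf, hg'⟩ hg'g
  · exact hg.not_prefers hw'.1 hw'w

theorem IsFavorite.exists_mem_delta_blocks [IsTrans F (prefW w)] [IsWellFounded F (prefW w)]
    [∀ f, Std.Asymm (prefF f)] (hfav : IsFavorite prefF S w f) (hμ : ∀ w, (w, μ w) ∈ S)
    (hpref : prefW w f (μ w)) :
    ∃ g, (w, g) ∈ delta prefW prefF S ∧ Blocks prefW prefF μ w g := by
  obtain ⟨g, hgμ, hg, hdelta⟩ := exists_isFavorite_mem_delta hpref hfav
  exact ⟨g, hdelta, hg.blocks hμ hgμ⟩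

variable [∀ w, IsTrans F (prefW w)] [∀ w, IsWellFounded F (prefW w)]
  [∀ f, IsTrans W (prefF f)] [∀ f, IsWellFounded W (prefF f)]

-- `hw` and `hf` say that `w` and `f` find each other at least as good as their partners in `μ`; in
-- this form they hold both for a matched and for a blocking pair.
theorem Unattractive.exists_mem_delta_blocks (hunattractive : Unattractive prefW prefF S w f)
    (hμ : ∀ w, (w, μ w) ∈ S) (hw : ∀ g, prefW w g f → prefW w g (μ w))
    (hf : ∀ v, prefF f v w → prefF f v (μ.symm f)) :
    ∃ v g, (v, g) ∈ delta prefW prefF S ∧ Blocks prefW prefF μ v g := by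
  rcases unattractive_iff_exists_isFavorite.1 hunattractive with
    ⟨f', hpref, hfav⟩ | ⟨w', hpref, hfav⟩
  · exact ⟨w, hfav.exists_mem_delta_blocks hμ (hw f' hpref)⟩
  · have hμ_symm : ∀ f, (f, μ.symm f) ∈ Prod.swap ⁻¹' S := fun f => by
      simpa using hμ (μ.symm f)
    obtain ⟨v, hdelta, hblocks⟩ := hfav.exists_mem_delta_blocks hμ_symm (hf w' hpref)
    exact ⟨v, f, mem_delta_swap_iff.1 hdelta, blocks_symm_iff.1 hblocks⟩

theorem SStable.to_delta (hstable : SStable prefW prefF S μ) :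
    SStable prefW prefF (delta prefW prefF S) μ := by
  obtain ⟨hμ, hno_block⟩ := hstable
  refine ⟨fun w => ⟨hμ w, fun hunattractive => ?_⟩, fun w f hdelta => hno_block w f hdelta.1⟩
  obtain ⟨v, g, hdelta, hblocks⟩ := hunattractive.exists_mem_delta_blocks hμ (fun _ => id)
    (fun _ hpref => by rwa [μ.symm_apply_apply])
  exact hno_block v g hdelta.1 hblocks

theorem SStable.of_delta_s4 (hstable : SStable prefW prefF (delta prefW prefF S) μ) :
    SStable prefW prefF S μ := by
  obtain ⟨hμ_delta, hno_block⟩ := hstable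
  have hμ : ∀ w, (w, μ w) ∈ S := fun w => (hμ_delta w).1
  refine ⟨hμ, fun w f hS hblocks => hno_block w f ⟨hS, fun hunattractive => ?_⟩ hblocks⟩
  obtain ⟨v, g, hdelta, hblocks'⟩ := hunattractive.exists_mem_delta_blocks hμ
    (fun _ hpref => _root_.trans hpref hblocks.1) (fun _ hpref => _root_.trans hpref hblocks.2)
  exact hno_block v g hdelta hblocks'

theorem sStable_delta_iff_s4 :
    SStable prefW prefF (delta prefW prefF S) μ ↔ SStable prefW prefF S μ :=
  ⟨SStable.of_delta_s4, SStable.to_delta⟩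

theorem sStable_iterate_delta_iff (n : ℕ) :
    SStable prefW prefF ((delta prefW prefF)^[n] S) μ ↔ SStable prefW prefF S μ := by
  induction n with
  | zero => rfl
  | succ n ih => rw [Function.iterate_succ_apply', sStable_delta_iff_s4, ih]

end

theorem sStable_univ_iff {W F : Type*} {prefW : W → F → F → Prop} {prefF : F → W → W → Prop}
    {μ : W ≃ F} : SStable prefW prefF Set.univ μ ↔ IsStableMatching prefW prefF μ := by
  simp only [SStable, IsStableMatching, Blocks, Set.mem_univ, implies_true, true_and,
    forall_const]

theorem stable_iff_normalForm_stable_general {W F : Type*} [Fintype W] [Fintype F]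
    (prefW : W → F → F → Prop) (prefF : F → W → W → Prop)
    (hW : ∀ w, IsStrictOrder F (prefW w)) (hF : ∀ f, IsStrictOrder W (prefF f)) (μ : W ≃ F) :
    IsStableMatching prefW prefF μ ↔ SStable prefW prefF (NormalForm W F prefW prefF) μ := by
  have : ∀ w, IsWellFounded F (prefW w) := fun w => ⟨Finite.wellFounded_of_trans_of_irrefl _⟩
  have : ∀ f, IsWellFounded W (prefF f) := fun f => ⟨Finite.wellFounded_of_trans_of_irrefl _⟩
  rw [NormalForm, sStable_iterate_delta_iff, sStable_univ_iff]

/-- A matching is stable iff it is `S*`-stable, where `S*` is the normal form. -/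
theorem stable_iff_normalForm_stable {W F : Type*} [Fintype W] [Fintype F] [Nonempty W]
    (hcard : Fintype.card W = Fintype.card F)
    (prefW : W → F → F → Prop) (prefF : F → W → W → Prop)
    (hW : ∀ w, IsStrictTotalOrder F (prefW w))
    (hF : ∀ f, IsStrictTotalOrder W (prefF f))
    (μ : W ≃ F) :
    IsStableMatching prefW prefF μ ↔ SStable prefW prefF (NormalForm W F prefW prefF) μ :=
  stable_iff_normalForm_stable_general prefW prefF (fun _ => inferInstance)
    (fun _ => inferInstance) μ
end

section
/- The normal form is independent of the order of deletions: if S_0 = W × F, S_1, …, S_m are subsets of W × F such that for each i < m the set S_i \ S_{i+1} is nonempty and every pair in S_i \ S_{i+1} is unattractive in S_i, and if no pair of S_m is unattractive in S_m, then S_m = S*. -/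
/-!
Call a worker top for a firm in `S` if the firm ranks her first among its partners in `S`. A top
pair can only be deleted because the worker has a still better firm for which she is top, and by
well-foundedness of her preferences some such firm survives the deletion. Hence every deleted pair
stays unattractive: a set `T` reached by deletions satisfies an *external stability* condition,
every pair outside `T` being unattractive in `T` itself. In turn, anything unattractive in a set
containing `T` is unattractive in `T`. So if no pair of `T` is unattractive in `T`, no sequence of
deletions can ever remove a pair of `T`. Two such sets reached from the same start therefore
contain each other.
-/

theorem isFixedPt_iterate_card_of_subset {α : Type*} [Fintype α] {g : Set α → Set α}
    (hg : ∀ s, g s ⊆ s) (s : Set α) : Function.IsFixedPt g (g^[Fintype.card α] s) := by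
  have hsucc (k : ℕ) : g^[k + 1] s ⊆ g^[k] s := by
    rw [Function.iterate_succ_apply']
    exact hg _
  have hmono : Monotone fun k => (g^[k] s)ᶜ.ncard :=
    monotone_nat_of_le_succ fun k => Set.ncard_le_ncard (Set.compl_subset_compl.2 (hsucc k))
  have hfixed {k : ℕ} (hk : (g^[k] s)ᶜ.ncard = (g^[k + 1] s)ᶜ.ncard) :
      Function.IsFixedPt g (g^[k] s) := by
    have hcompl := Set.eq_of_subset_of_ncard_le (Set.compl_subset_compl.2 (hsucc k)) hk.ge
    rw [Function.IsFixedPt, ← Function.iterate_succ_apply' g k s]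
    exact (compl_injective hcompl).symm
  have hbound (k : ℕ) : (g^[k] s)ᶜ.ncard ≤ Fintype.card α :=
    Nat.card_eq_fintype_card (α := α) ▸ Set.ncard_le_card _
  have hstable (k : ℕ) (hk : (g^[k] s)ᶜ.ncard = (g^[k + 1] s)ᶜ.ncard) :
      (g^[k + 1] s)ᶜ.ncard = (g^[k + 2] s)ᶜ.ncard := by
    have hfix := hfixed hk
    rw [Function.iterate_succ_apply', Function.iterate_succ_apply' g (k + 1),
      Function.iterate_succ_apply', hfix.eq, hfix.eq]
  exact hfixed (Nat.stabilises_of_monotone hmono hbound hstable (Nat.le_succ _)).symm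

section Deletion

variable {W F : Type*} {prefW : W → F → F → Prop} {prefF : F → W → W → Prop}
  {S T U : Set (W × F)} {w : W} {f f' : F}

/-- In `S`, firm `f` ranks `w` above all its other partners. Exchanging the two sides of the
market, `IsTopWorker prefW (Prod.swap ⁻¹' S) f w` says that `f` is the top firm of `w`. -/
def IsTopWorker (prefF : F → W → W → Prop) (S : Set (W × F)) (w : W) (f : F) : Prop :=
  (w, f) ∈ S ∧ ∀ w', w' ≠ w → (w', f) ∈ S → prefF f w w'

/-- Worker `w` is top in `S` for some firm that she prefers to `f`: the worker's half of
`Unattractive`, the firm's half being obtained by exchanging the two sides of the market. -/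
def HasBetterOffer (prefW : W → F → F → Prop) (prefF : F → W → W → Prop)
    (S : Set (W × F)) (w : W) (f : F) : Prop :=
  ∃ f', IsTopWorker prefF S w f' ∧ prefW w f' f

/-- One round of the deletion process: `T` arises from `S` by deleting some, not necessarily all,
of the pairs that are unattractive in `S`. The case `T = S` is allowed. -/
def DeletionStep (prefW : W → F → F → Prop) (prefF : F → W → W → Prop)
    (S T : Set (W × F)) : Prop :=
  T ⊆ S ∧ ∀ p ∈ S \ T, Unattractive prefW prefF S p.1 p.2

/-- External stability of `T` in `S`, in the sense of von Neumann and Morgenstern with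
unattractiveness in the role of domination: `T` by itself makes every pair of `S \ T`
unattractive. -/
def ExternallyStable (prefW : W → F → F → Prop) (prefF : F → W → W → Prop)
    (S T : Set (W × F)) : Prop :=
  T ⊆ S ∧ ∀ p ∈ S \ T, Unattractive prefW prefF T p.1 p.2

/-- Internal stability, the counterpart of `ExternallyStable`: no pair of `T` is unattractive
in `T`, so that the deletion process stops at `T`. -/
def InternallyStable (prefW : W → F → F → Prop) (prefF : F → W → W → Prop)
    (T : Set (W × F)) : Prop :=
  ∀ p ∈ T, ¬ Unattractive prefW prefF T p.1 p.2

theorem unattractive_iff_hasBetterOffer :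
    Unattractive prefW prefF S w f ↔
      HasBetterOffer prefW prefF S w f ∨ HasBetterOffer prefF prefW (Prod.swap ⁻¹' S) f w :=
  or_congr (exists_congr fun _ => and_assoc.symm.trans and_right_comm)
    (exists_congr fun _ => and_assoc.symm.trans and_right_comm)

theorem unattractive_swap :
    Unattractive prefF prefW (Prod.swap ⁻¹' S) f w ↔ Unattractive prefW prefF S w f :=
  or_comm

theorem DeletionStep.swap (h : DeletionStep prefW prefF S T) :
    DeletionStep prefF prefW (Prod.swap ⁻¹' S) (Prod.swap ⁻¹' T) :=
  ⟨Set.preimage_mono h.1, fun p hp => unattractive_swap.2 (h.2 p.swap hp)⟩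

theorem ExternallyStable.swap (h : ExternallyStable prefW prefF S T) :
    ExternallyStable prefF prefW (Prod.swap ⁻¹' S) (Prod.swap ⁻¹' T) :=
  ⟨Set.preimage_mono h.1, fun p hp => unattractive_swap.2 (h.2 p.swap hp)⟩

theorem IsTopWorker.of_subset (h : IsTopWorker prefF S w f) (hTS : T ⊆ S) (hT : (w, f) ∈ T) :
    IsTopWorker prefF T w f :=
  ⟨hT, fun w' hne hw' => h.2 w' hne (hTS hw')⟩

theorem HasBetterOffer.of_pref [∀ w, IsTrans F (prefW w)]
    (h : HasBetterOffer prefW prefF S w f') (hf : prefW w f' f) :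
    HasBetterOffer prefW prefF S w f := by
  obtain ⟨g, htop, hg⟩ := h
  exact ⟨g, htop, _root_.trans hg hf⟩

theorem IsTopWorker.hasBetterOffer_of_unattractive [∀ f, Std.Asymm (prefF f)]
    (h : IsTopWorker prefF S w f) (hTS : T ⊆ S) (hu : Unattractive prefW prefF T w f) :
    HasBetterOffer prefW prefF T w f := by
  refine (unattractive_iff_hasBetterOffer.1 hu).resolve_right ?_
  rintro ⟨w', ⟨hw', -⟩, hpref⟩
  exact asymm (h.2 w' (ne_of_irrefl hpref) (hTS hw')) hpref

theorem DeletionStep.hasBetterOffer [∀ w, IsTrans F (prefW w)] [∀ w, IsWellFounded F (prefW w)]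
    [∀ f, Std.Asymm (prefF f)] (h : DeletionStep prefW prefF S T)
    (hS : HasBetterOffer prefW prefF S w f) : HasBetterOffer prefW prefF T w f := by
  induction f using IsWellFounded.induction (prefW w) with
  | ind f ih =>
    obtain ⟨f', htop, hf'⟩ := hS
    by_cases hT : (w, f') ∈ T
    · exact ⟨f', htop.of_subset h.1 hT, hf'⟩
    · have hbetter : HasBetterOffer prefW prefF S w f' :=
        htop.hasBetterOffer_of_unattractive subset_rfl (h.2 _ ⟨htop.1, hT⟩)
      exact (ih f' hf' hbetter).of_pref hf'

theorem ExternallyStable.hasBetterOffer [∀ w, IsTrans F (prefW w)] [∀ f, Std.Asymm (prefF f)]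
    (h : ExternallyStable prefW prefF S T) (hS : HasBetterOffer prefW prefF S w f) :
    HasBetterOffer prefW prefF T w f := by
  obtain ⟨f', htop, hf'⟩ := hS
  by_cases hT : (w, f') ∈ T
  · exact ⟨f', htop.of_subset h.1 hT, hf'⟩
  · exact (htop.hasBetterOffer_of_unattractive h.1 (h.2 _ ⟨htop.1, hT⟩)).of_pref hf'

theorem DeletionStep.externallyStable [∀ w, IsTrans F (prefW w)]
    [∀ w, IsWellFounded F (prefW w)] [∀ f, IsTrans W (prefF f)] [∀ f, IsWellFounded W (prefF f)]
    (h : DeletionStep prefW prefF S T) : ExternallyStable prefW prefF S T :=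
  ⟨h.1, fun p hp => unattractive_iff_hasBetterOffer.2 <|
    (unattractive_iff_hasBetterOffer.1 (h.2 p hp)).imp h.hasBetterOffer h.swap.hasBetterOffer⟩

theorem ExternallyStable.unattractive [∀ w, IsTrans F (prefW w)] [∀ w, Std.Asymm (prefW w)]
    [∀ f, IsTrans W (prefF f)] [∀ f, Std.Asymm (prefF f)]
    (h : ExternallyStable prefW prefF S T) (hS : Unattractive prefW prefF S w f) :
    Unattractive prefW prefF T w f :=
  unattractive_iff_hasBetterOffer.2 <|
    (unattractive_iff_hasBetterOffer.1 hS).imp h.hasBetterOffer h.swap.hasBetterOffer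

theorem ExternallyStable.trans [∀ w, IsTrans F (prefW w)] [∀ w, Std.Asymm (prefW w)]
    [∀ f, IsTrans W (prefF f)] [∀ f, Std.Asymm (prefF f)]
    (hST : ExternallyStable prefW prefF S T) (hTU : ExternallyStable prefW prefF T U) :
    ExternallyStable prefW prefF S U := by
  refine ⟨hTU.1.trans hST.1, fun p ⟨hpS, hpU⟩ => ?_⟩
  by_cases hpT : p ∈ T
  · exact hTU.2 p ⟨hpT, hpU⟩
  · exact hTU.unattractive (hST.2 p ⟨hpS, hpT⟩)

theorem ExternallyStable.of_subset (h : ExternallyStable prefW prefF S U) (hUT : U ⊆ T)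
    (hTS : T ⊆ S) : ExternallyStable prefW prefF T U :=
  ⟨hUT, fun p hp => h.2 p ⟨hTS hp.1, hp.2⟩⟩

theorem externallyStable_of_reflTransGen [∀ w, IsTrans F (prefW w)]
    [∀ w, IsWellFounded F (prefW w)] [∀ f, IsTrans W (prefF f)] [∀ f, IsWellFounded W (prefF f)]
    (h : Relation.ReflTransGen (DeletionStep prefW prefF) S T) :
    ExternallyStable prefW prefF S T := by
  induction h with
  | refl => exact ⟨subset_rfl, fun _ hp => absurd hp.1 hp.2⟩
  | tail _ hstep ih => exact ih.trans hstep.externallyStable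

theorem InternallyStable.subset_of_deletionStep [∀ w, IsTrans F (prefW w)]
    [∀ w, Std.Asymm (prefW w)] [∀ f, IsTrans W (prefF f)] [∀ f, Std.Asymm (prefF f)]
    (hint : InternallyStable prefW prefF T) (hext : ExternallyStable prefW prefF S T)
    (h : DeletionStep prefW prefF S U) : T ⊆ U := by
  intro p hpT
  by_contra hpU
  exact hint p hpT (hext.unattractive (h.2 p ⟨hext.1 hpT, hpU⟩))

theorem InternallyStable.subset_of_reflTransGen [∀ w, IsTrans F (prefW w)]
    [∀ w, Std.Asymm (prefW w)] [∀ f, IsTrans W (prefF f)] [∀ f, Std.Asymm (prefF f)]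
    (hint : InternallyStable prefW prefF T) (hext : ExternallyStable prefW prefF S T)
    (h : Relation.ReflTransGen (DeletionStep prefW prefF) S U) : T ⊆ U := by
  suffices hU : ExternallyStable prefW prefF U T from hU.1
  induction h with
  | refl => exact hext
  | tail _ hstep ih => exact ih.of_subset (hint.subset_of_deletionStep ih hstep) hstep.1

theorem InternallyStable.eq_of_reflTransGen [∀ w, IsTrans F (prefW w)]
    [∀ w, IsWellFounded F (prefW w)] [∀ f, IsTrans W (prefF f)] [∀ f, IsWellFounded W (prefF f)]
    (hT : InternallyStable prefW prefF T) (hU : InternallyStable prefW prefF U)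
    (hST : Relation.ReflTransGen (DeletionStep prefW prefF) S T)
    (hSU : Relation.ReflTransGen (DeletionStep prefW prefF) S U) : T = U :=
  (hT.subset_of_reflTransGen (externallyStable_of_reflTransGen hST) hSU).antisymm
    (hU.subset_of_reflTransGen (externallyStable_of_reflTransGen hSU) hST)

theorem deletionStep_delta (S : Set (W × F)) :
    DeletionStep prefW prefF S (delta prefW prefF S) :=
  ⟨Set.sep_subset _ _, fun _ hp => by_contra fun hu => hp.2 ⟨hp.1, hu⟩⟩

theorem isFixedPt_delta_iff_internallyStable :
    Function.IsFixedPt (delta prefW prefF) S ↔ InternallyStable prefW prefF S :=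
  Set.sep_eq_self_iff_mem_true

theorem reflTransGen_deletionStep_delta_iterate (S : Set (W × F)) (k : ℕ) :
    Relation.ReflTransGen (DeletionStep prefW prefF) S ((delta prefW prefF)^[k] S) := by
  induction k with
  | zero => exact .refl
  | succ k ih =>
    rw [Function.iterate_succ_apply']
    exact ih.tail (deletionStep_delta _)

theorem internallyStable_delta_iterate_card [Fintype W] [Fintype F] (S : Set (W × F)) :
    InternallyStable prefW prefF ((delta prefW prefF)^[Fintype.card (W × F)] S) :=
  isFixedPt_delta_iff_internallyStable.1 <|
    isFixedPt_iterate_card_of_subset (fun T => (deletionStep_delta T).1) S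

end Deletion

theorem normalForm_order_independent_general {W F : Type*} [Fintype W] [Fintype F]
    (prefW : W → F → F → Prop) (prefF : F → W → W → Prop)
    (hW : ∀ w, IsStrictOrder F (prefW w))
    (hF : ∀ f, IsStrictOrder W (prefF f))
    (m : ℕ) (S : ℕ → Set (W × F))
    (hsub : ∀ i < m, S (i + 1) ⊆ S i)
    (hdel : ∀ i < m, ∀ p ∈ S i \ S (i + 1), Unattractive prefW prefF (S i) p.1 p.2)
    (hfix : ∀ p ∈ S m, ¬ Unattractive prefW prefF (S m) p.1 p.2) :
    S m = (delta prefW prefF)^[Fintype.card (W × F)] (S 0) := by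
  have hwfW (w : W) : IsWellFounded F (prefW w) := ⟨Finite.wellFounded_of_trans_of_irrefl _⟩
  have hwfF (f : F) : IsWellFounded W (prefF f) := ⟨Finite.wellFounded_of_trans_of_irrefl _⟩
  have hreach : Relation.ReflTransGen (DeletionStep prefW prefF) (S 0) (S m) :=
    Relation.ReflTransGen.lift S (fun _ _ h => h) _ _ <|
      reflTransGen_of_succ_of_le (fun i j => DeletionStep prefW prefF (S i) (S j))
        (fun i hi => ⟨hsub i hi.2, hdel i hi.2⟩) m.zero_le
  exact InternallyStable.eq_of_reflTransGen hfix (internallyStable_delta_iterate_card _) hreach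
    (reflTransGen_deletionStep_delta_iterate _ _)

/-- The normal form is independent of the order of deletions. -/
theorem normalForm_order_independent {W F : Type*} [Fintype W] [Fintype F] [Nonempty W]
    (hcard : Fintype.card W = Fintype.card F)
    (prefW : W → F → F → Prop) (prefF : F → W → W → Prop)
    (hW : ∀ w, IsStrictTotalOrder F (prefW w))
    (hF : ∀ f, IsStrictTotalOrder W (prefF f))
    (m : ℕ) (S : ℕ → Set (W × F))
    (h0 : S 0 = Set.univ)
    (hsub : ∀ i < m, S (i + 1) ⊆ S i)
    (hne : ∀ i < m, (S i \ S (i + 1)).Nonempty)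
    (hdel : ∀ i < m, ∀ p ∈ S i \ S (i + 1), Unattractive prefW prefF (S i) p.1 p.2)
    (hfix : ∀ p ∈ S m, ¬ Unattractive prefW prefF (S m) p.1 p.2) :
    S m = NormalForm W F prefW prefF := by
  rw [NormalForm, ← h0]
  exact normalForm_order_independent_general prefW prefF (fun w => (hW w).toIsStrictOrder)
    (fun f => (hF f).toIsStrictOrder) m S hsub hdel hfix
end
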